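/- arXiv:cs/0205011 — 2 statements merged into one kernel-verified Lean document; each statement's English description precedes it below -/
import Mathlib

section
/- Every directed cycle of G contains at most one redundant edge. -/
/-- A set `S` of directed edges strongly connects the vertex set `V`:
for every pair of vertices there is a directed path using only edges of `S`. -/
def StronglyConnects {V : Type*} (S : Set (V × V)) : Prop :=
  ∀ u v : V, Relation.ReflTransGen (fun a b => (a, b) ∈ S) u v

/-- The edges of the closed walk determined by the vertex list `c`
(consecutive pairs, wrapping around from the last vertex to the first). -/
def cycleEdges {V : Type*} (c : List V) : List (V × V) := c.zip (c.rotate 1)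

/-- `c` is a directed cycle of the graph with edge set `E`: a nonempty list of
distinct vertices all of whose consecutive (wrap-around) pairs are edges.
Its length (number of edges) is `c.length`. -/
def IsCycle {V : Type*} (E : Set (V × V)) (c : List V) : Prop :=
  c ≠ [] ∧ c.Nodup ∧ ∀ e ∈ cycleEdges c, e ∈ E

/-- An edge is redundant if deleting it leaves a strongly connected graph. -/
def Redundant {V : Type*} (E : Set (V × V)) (e : V × V) : Prop :=
  e ∈ E ∧ StronglyConnects (E \ {e})

/-- An edge is necessary if deleting it destroys strong connectivity. -/
def Necessary {V : Type*} (E : Set (V × V)) (e : V × V) : Prop :=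
  e ∈ E ∧ ¬ StronglyConnects (E \ {e})

/-- The set of necessary edges. -/
def necessarySet {V : Type*} (E : Set (V × V)) : Set (V × V) :=
  {e | Necessary E e}

/-- An edge `(u, v)` is unsatisfied if there is no directed path from `v`
back to `u` consisting only of necessary edges. -/
def Unsatisfied {V : Type*} (E : Set (V × V)) (e : V × V) : Prop :=
  e ∈ E ∧ ¬ Relation.ReflTransGen (fun a b => Necessary E (a, b)) e.2 e.1

/-- A redundant edge `r` provides a cycle for an unsatisfied edge `(u, v)` if
there is a directed path from `v` to `u` consisting of necessary edges and `r`. -/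
def ProvidesCycle {V : Type*} (E : Set (V × V)) (r : V × V) (e : V × V) : Prop :=
  Relation.ReflTransGen (fun a b => Necessary E (a, b) ∨ (a, b) = r) e.2 e.1

/-- `w` is a cut vertex: deleting `w` disconnects the underlying undirected graph,
i.e. some two vertices distinct from `w` are joined by no undirected path avoiding `w`. -/
def IsCutVertex {V : Type*} (E : Set (V × V)) (w : V) : Prop :=
  ∃ u v : V, u ≠ w ∧ v ≠ w ∧
    ¬ Relation.ReflTransGen
        (fun a b => a ≠ w ∧ b ≠ w ∧ ((a, b) ∈ E ∨ (b, a) ∈ E)) u v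

theorem aux_cycle {V : Type*} (E : Set (V × V)) (l : List V) : ∀ (a x : V),
    List.IsChain (fun a b => (a, b) ∈ E) (a :: l) →
    ((a :: l).getLast (by simp), x) ∈ E → ∀ e ∈ (a :: l).zip (l ++ [x]), e ∈ E := by
  induction l with
  | nil => intro a x _ h e he; simp at he h; subst he; exact h
  | cons b l ih =>
    intro a x hch h e he
    rw [List.isChain_cons_cons] at hch
    simp only [List.cons_append, List.zip_cons_cons, List.mem_cons] at he
    rcases he with rfl | he
    · exact hch.1
    · exact ih b x hch.2 (by simpa using h) e (by simpa using he)

theorem aux_len {V : Type*} (E : Set (V × V))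
    (hcyc : ∀ c : List V, IsCycle E c → c.length ≤ 3) (a b : V) (l : List V)
    (hn : (a :: l).Nodup) (hch : List.IsChain (fun a b => (a, b) ∈ E) (a :: l))
    (hl : (a :: l).getLast (by simp) = b) (h : (b, a) ∈ E) : l.length ≤ 2 := by
  have := hcyc (a :: l) ⟨by simp, hn, by
    have := aux_cycle E l a a hch (by rw [hl]; exact h)
    simpa [cycleEdges] using this⟩
  simp only [List.length_cons] at this; omega

theorem aux_path {V : Type*} (r : V → V → Prop) (a b : V) (h : Relation.ReflTransGen r a b) :
    ∃ l : List V, (a :: l).Nodup ∧ List.IsChain r (a :: l) ∧ (a :: l).getLast (by simp) = b := by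
  induction h using Relation.ReflTransGen.head_induction_on with
  | refl => exact ⟨[], by simp, by simp, by simp⟩
  | @head a c hac _ ih =>
    obtain ⟨l, hn, hch, hl⟩ := ih
    by_cases ha : a ∈ c :: l
    · obtain ⟨s, t, hst⟩ := List.append_of_mem ha
      refine ⟨t, ?_, ?_, ?_⟩
      · rw [hst] at hn; exact hn.of_append_right
      · rw [hst] at hch; exact hch.right_of_append
      · rw [← hl]; simp [hst]
    · exact ⟨c :: l, by simp_all, by rw [List.isChain_cons_cons]; exact ⟨hac, hch⟩, by simpa using hl⟩

theorem aux_mem {V : Type*} (r : V → V → Prop) (p : V → Prop) (hr : ∀ a b, r a b → p b)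
    (l : List V) : ∀ a, List.IsChain r (a :: l) → ∀ x ∈ l, p x := by
  induction l with
  | nil => simp
  | cons b l ih =>
    intro a hch x hx
    rw [List.isChain_cons_cons] at hch
    rcases List.mem_cons.1 hx with rfl | hx
    · exact hr _ _ hch.1
    · exact ih b hch.2 x hx

theorem aux_K3 {V : Type*} [Fintype V] (E : Set (V × V))
    (hconn : StronglyConnects E)
    (hcyc : ∀ c : List V, IsCycle E c → c.length ≤ 3)
    (hcard : 4 ≤ Fintype.card V)
    (hcut : ∀ w : V, ¬ IsCutVertex E w) (u v x : V) (huv : u ≠ v) (hvx : v ≠ x) (hux : u ≠ x)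
    (h1 : (u, v) ∈ E) (h2 : (v, u) ∈ E) (h3 : (v, x) ∈ E) (h4 : (x, v) ∈ E)
    (h5 : (u, x) ∈ E) (h6 : (x, u) ∈ E) : False := by
  classical
  obtain ⟨K, hK⟩ : ∃ K : Finset V, K = {u, v, x} := ⟨_, rfl⟩
  have hKc : K.card ≤ 3 := by rw [hK]; exact Finset.card_le_three
  have hmem : ∀ z, z ∈ K ↔ z = u ∨ z = v ∨ z = x := by intro z; simp [hK]
  obtain ⟨w0, hw0⟩ : ∃ w0, w0 ∉ K := by
    by_contra hcon
    push Not at hcon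
    have : K = Finset.univ := by ext; simp [hcon]
    rw [this, Finset.card_univ] at hKc
    omega
  have hthird : ∀ k k', k ∈ K → k' ∈ K → k ≠ k' →
      ∃ t ∈ K, t ≠ k ∧ t ≠ k' ∧ (k', t) ∈ E ∧ (t, k) ∈ E := by
    intro k k' hk hk' hne
    rw [hmem] at hk hk'
    rcases hk with rfl | rfl | rfl <;> rcases hk' with rfl | rfl | rfl <;>
      first
      | exact absurd rfl hne
      | exact ⟨u, by simp [hK], by grind⟩
      | exact ⟨v, by simp [hK], by grind⟩
      | exact ⟨x, by simp [hK], by grind⟩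
  let R : V → V → Prop := fun a b => (a, b) ∈ E ∧ b ∉ K
  have ear : ∀ k k' w w', k ∈ K → k' ∈ K → (k, w) ∈ E → w ∉ K → Relation.ReflTransGen R w w' →
      (w', k') ∈ E → k = k' := by
    intro k k' w w' hk hk' hkw hw hp hwk
    by_contra hne
    obtain ⟨t, htK, htk, htk', e1, e2⟩ := hthird k k' hk hk' hne
    obtain ⟨l, hn, hch, hl⟩ := aux_path R w w' hp
    have hout := aux_mem R (fun z => z ∉ K) (fun a b h => h.2) l w hch
    have hch' : List.IsChain (fun a b => (a, b) ∈ E) (w :: l) := hch.imp (fun a b h => h.1)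
    have := aux_len E hcyc k' w' (t :: k :: w :: l) (by
      have a1 : k' ∉ l := fun h => hout _ h hk'
      have a2 : k ∉ l := fun h => hout _ h hk
      have a3 : t ∉ l := fun h => hout _ h htK
      have a4 : k' ≠ w := fun h => hw (h ▸ hk')
      have a5 : k ≠ w := fun h => hw (h ▸ hk)
      have a6 : t ≠ w := fun h => hw (h ▸ htK)
      rw [List.nodup_cons, List.nodup_cons, List.nodup_cons]
      refine ⟨?_, ?_, ?_, hn⟩ <;> simp only [List.mem_cons, not_or]
      · exact ⟨fun h => htk' h.symm, fun h => hne h.symm, a4, a1⟩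
      · exact ⟨htk, a6, a3⟩
      · exact ⟨a5, a2⟩) (by
      simp only [List.isChain_cons_cons]
      exact ⟨e1, e2, hkw, hch'⟩) (by simpa using hl) hwk
    simp at this
  have exit_ : ∀ z, z ∉ K → ∃ k w, k ∈ K ∧ (k, w) ∈ E ∧ w ∉ K ∧ Relation.ReflTransGen R w z := by
    intro z
    induction hconn u z with
    | refl => intro h; exact absurd (by simp [hK]) h
    | @tail b c _ hbc ih =>
      intro hc
      by_cases hb : b ∈ K
      · exact ⟨b, c, hb, hbc, hc, .refl⟩
      · obtain ⟨k, w, a1, a2, a3, a4⟩ := ih hb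
        exact ⟨k, w, a1, a2, a3, a4.tail ⟨hbc, hc⟩⟩
  have entry_ : ∀ z, z ∉ K → ∃ k w, k ∈ K ∧ (w, k) ∈ E ∧ Relation.ReflTransGen R z w := by
    intro z
    induction hconn z u using Relation.ReflTransGen.head_induction_on with
    | refl => intro h; exact absurd (by simp [hK]) h
    | @head b c hbc _ ih =>
      intro hb
      by_cases hc : c ∈ K
      · exact ⟨c, b, hc, hbc, .refl⟩
      · obtain ⟨k, w, a1, a2, a3⟩ := ih hc
        exact ⟨k, w, a1, a2, a3.head ⟨hbc, hc⟩⟩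
  obtain ⟨k, w, hk, hkw, hw, hww⟩ := exit_ w0 hw0
  obtain ⟨t, htK, htk⟩ : ∃ t ∈ K, t ≠ k := by
    by_cases h : k = u
    · exact ⟨v, by simp [hK], by rw [h]; exact huv.symm⟩
    · exact ⟨u, by simp [hK], fun h' => h h'.symm⟩
  refine hcut k ⟨w0, t, fun h => hw0 (h ▸ hk), htk, fun hp => ?_⟩
  have key : ∀ z, Relation.ReflTransGen
        (fun a b => a ≠ k ∧ b ≠ k ∧ ((a, b) ∈ E ∨ (b, a) ∈ E)) w0 z →
        z ∉ K ∧ ∃ w, (k, w) ∈ E ∧ w ∉ K ∧ Relation.ReflTransGen R w z := by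
    intro z hz
    induction hz with
    | refl => exact ⟨hw0, w, hkw, hw, hww⟩
    | @tail z z' _ hs ih =>
      obtain ⟨hz, w, b1, b2, b3⟩ := ih
      obtain ⟨-, hzk, hE | hE⟩ := hs
      · have hz' : z' ∉ K := fun h => hzk (ear k z' w z hk h b1 b2 b3 hE).symm
        exact ⟨hz', w, b1, b2, b3.tail ⟨hE, hz'⟩⟩
      · obtain ⟨k2, y, c1, c2, c3⟩ := entry_ z hz
        have e1 := ear k k2 w y hk c1 b1 b2 (b3.trans c3) c2
        have hz' : z' ∉ K := fun h => hzk ((ear z' k2 z y h c1 hE hz c3 c2).trans e1.symm)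
        obtain ⟨k3, w3, d1, d2, d3, d4⟩ := exit_ z' hz'
        have e2 := ear k3 k2 w3 y d1 c1 d2 d3 ((d4.tail ⟨hE, hz⟩).trans c3) c2
        have : k3 = k := e2.trans e1.symm
        subst this
        exact ⟨hz', w3, d2, d3, d4⟩
  exact (key t hp).1 htK

theorem aux_two {V : Type*} (E : Set (V × V))
    (hcyc : ∀ c : List V, IsCycle E c → c.length ≤ 3) (u v : V) (huv : u ≠ v)
    (h2 : (v, u) ∈ E) (hr : Redundant E (u, v)) :
    ∃ x, x ≠ u ∧ x ≠ v ∧ (u, x) ∈ E ∧ (x, v) ∈ E := by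
  obtain ⟨l, hn, hch, hl⟩ := aux_path _ _ _ (hr.2 u v)
  have hlen := aux_len E hcyc u v l hn (hch.imp (fun a b h => h.1)) hl h2
  match l, hn, hch, hl, hlen with
  | [], _, _, hl, _ => exact absurd (by simpa using hl) huv
  | [y], _, hch, hl, _ =>
    simp at hl hch
    exact absurd hl hch.2
  | [x, y], hn, hch, hl, _ =>
    simp at hl hch hn
    subst hl
    exact ⟨x, by grind, by grind, hch.1.1, hch.2.1⟩
  | _ :: _ :: _ :: _, _, _, _, hlen => simp at hlen

theorem aux_seg {V : Type*} (E : Set (V × V))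
    (hcyc : ∀ c : List V, IsCycle E c → c.length ≤ 3) (u v : V) (huv : u ≠ v)
    (h2 : (v, u) ∈ E) (l : List V) (hn : (u :: l).Nodup)
    (hch : List.IsChain (fun a b => (a, b) ∈ E) (u :: l))
    (hl : (u :: l).getLast (by simp) = v) :
    l = [v] ∧ (u, v) ∈ E ∨ ∃ x, l = [x, v] ∧ x ≠ u ∧ x ≠ v ∧ (u, x) ∈ E ∧ (x, v) ∈ E := by
  have hlen := aux_len E hcyc u v l hn hch hl h2
  match l, hn, hch, hl, hlen with
  | [], _, _, hl, _ => exact absurd (by simpa using hl) huv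
  | [y], _, hch, hl, _ =>
    simp at hl hch
    subst hl
    exact Or.inl ⟨rfl, hch⟩
  | [x, y], hn, hch, hl, _ =>
    simp at hl hch hn
    subst hl
    exact Or.inr ⟨x, rfl, by grind, by grind, hch.1, hch.2⟩
  | _ :: _ :: _ :: _, _, _, _, hlen => simp at hlen

theorem aux_three {V : Type*} (E : Set (V × V))
    (hcyc : ∀ c : List V, IsCycle E c → c.length ≤ 3) (u v w : V) (huv : u ≠ v) (hvw : v ≠ w)
    (huw : u ≠ w)
    (h2 : (v, w) ∈ E) (h3 : (w, u) ∈ E) (hr : Redundant E (u, v)) :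
    ((u, w) ∈ E ∨ ∃ x, x ≠ u ∧ x ≠ v ∧ x ≠ w ∧ (u, x) ∈ E ∧ (x, w) ∈ E) ∧
    ((w, v) ∈ E ∨ ∃ x, x ≠ u ∧ x ≠ v ∧ x ≠ w ∧ (w, x) ∈ E ∧ (x, v) ∈ E) := by
  obtain ⟨l, hn, hch0, hl⟩ := aux_path _ _ _ (hr.2 u v)
  have hch : List.IsChain (fun a b => (a, b) ∈ E) (u :: l) := hch0.imp (fun a b h => h.1)
  have hwl : w ∈ l := by
    by_contra hw
    have hlen := aux_len E hcyc w v (u :: l)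
      (by rw [List.nodup_cons]; exact ⟨by simp [hw, huw.symm], hn⟩)
      (by rw [List.isChain_cons_cons]; exact ⟨h3, hch⟩) (by simpa using hl) h2
    match l, hch0, hl, hlen with
    | [], _, hl, _ => exact absurd (by simpa using hl) huv
    | [y], hch, hl, _ =>
      simp at hl hch
      exact absurd hl hch.2
    | _ :: _ :: _, _, _, hlen => simp at hlen
  obtain ⟨s, t, rfl⟩ := List.append_of_mem hwl
  have e1 : u :: (s ++ w :: t) = (u :: (s ++ [w])) ++ t := by simp
  have e2 : u :: (s ++ w :: t) = (u :: s) ++ (w :: t) := by simp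
  have hvt : v ∈ t := by
    have hl' : (w :: t).getLast (by simp) = v := by rw [← hl]; simp
    have := List.getLast_mem (l := w :: t) (by simp)
    rw [hl'] at this
    rcases List.mem_cons.1 this with h | h
    · exact absurd h hvw
    · exact h
  have A := aux_seg E hcyc u w huw h3 (s ++ [w]) (by rw [e1] at hn; exact hn.of_append_left)
    (by rw [e1] at hch; exact hch.left_of_append) (by simp)
  have B := aux_seg E hcyc w v hvw.symm h2 t (by rw [e2] at hn; exact hn.of_append_right)
    (by rw [e2] at hch; exact hch.right_of_append) (by rw [← hl]; simp)
  constructor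
  · rcases A with A | ⟨x, a1, a2, a3, a4, a5⟩
    · exact Or.inl A.2
    · refine Or.inr ⟨x, a2, ?_, a3, a4, a5⟩
      rintro rfl
      have : s = [x] := by
        have := congrArg List.dropLast a1
        simpa using this
      subst this
      simp at hn
      grind
  · rcases B with B | ⟨x, a1, a2, a3, a4, a5⟩
    · exact Or.inl B.2
    · refine Or.inr ⟨x, ?_, a3, a2, a4, a5⟩
      rintro rfl
      subst a1
      simp at hn

theorem aux_four {V : Type*} (E : Set (V × V))
    (hcyc : ∀ c : List V, IsCycle E c → c.length ≤ 3) (a b c d : V)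
    (hn : a ≠ b ∧ a ≠ c ∧ a ≠ d ∧ b ≠ c ∧ b ≠ d ∧ c ≠ d)
    (h1 : (a, b) ∈ E) (h2 : (b, c) ∈ E) (h3 : (c, d) ∈ E) (h4 : (d, a) ∈ E) : False := by
  have := aux_len E hcyc a d [b, c, d] (by simp; grind) (by simp; grind) (by simp) h4
  simp at this

theorem aux_five {V : Type*} (E : Set (V × V))
    (hcyc : ∀ c : List V, IsCycle E c → c.length ≤ 3) (a b c d e : V)
    (hn : [a, b, c, d, e].Nodup)
    (h1 : (a, b) ∈ E) (h2 : (b, c) ∈ E) (h3 : (c, d) ∈ E) (h4 : (d, e) ∈ E)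
    (h5 : (e, a) ∈ E) : False := by
  have := aux_len E hcyc a e [b, c, d, e] hn (by simp; grind) (by simp) h5
  simp at this

theorem aux_six {V : Type*} (E : Set (V × V))
    (hcyc : ∀ c : List V, IsCycle E c → c.length ≤ 3) (a b c d e f : V)
    (hn : [a, b, c, d, e, f].Nodup)
    (h1 : (a, b) ∈ E) (h2 : (b, c) ∈ E) (h3 : (c, d) ∈ E) (h4 : (d, e) ∈ E)
    (h5 : (e, f) ∈ E) (h6 : (f, a) ∈ E) : False := by
  have := aux_len E hcyc a f [b, c, d, e, f] hn (by simp; grind) (by simp) h6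
  simp at this

theorem aux_tri {V : Type*} [Fintype V] (E : Set (V × V))
    (hconn : StronglyConnects E)
    (hcyc : ∀ c : List V, IsCycle E c → c.length ≤ 3)
    (hcard : 4 ≤ Fintype.card V)
    (hcut : ∀ w : V, ¬ IsCutVertex E w) (u v w : V) (huv : u ≠ v) (hvw : v ≠ w) (huw : u ≠ w)
    (h1 : (u, v) ∈ E) (h2 : (v, w) ∈ E) (h3 : (w, u) ∈ E)
    (r1 : Redundant E (u, v)) (r2 : Redundant E (v, w)) : False := by
  obtain ⟨A, B⟩ := aux_three E hcyc u v w huv hvw huw h2 h3 r1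
  obtain ⟨C, -⟩ := aux_three E hcyc v w u hvw huw.symm huv.symm h3 h1 r2
  have F4 := aux_four E hcyc
  have F5 := aux_five E hcyc
  have F6 := aux_six E hcyc
  rcases A with A | ⟨a, a1, a2, a3, a4, a5⟩ <;> rcases B with B | ⟨b, b1, b2, b3, b4, b5⟩ <;>
    rcases C with C | ⟨c, c1, c2, c3, c4, c5⟩
  · exact aux_K3 E hconn hcyc hcard hcut u v w huv hvw huw h1 C h2 B A h3
  · exact F4 u w v c (by grind) A B c4 c5
  · exact F4 u w b v (by grind) A b4 b5 C
  · by_cases h : b = c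
    · subst h; exact F4 w b u v (by grind) b4 c5 h1 h2
    · exact F5 u w b v c (by simp; grind) A b4 b5 c4 c5
  · exact F4 u a w v (by grind) a4 a5 B C
  · by_cases h : a = c
    · subst h; exact F4 u v a w (by grind) h1 c4 a5 h3
    · exact F5 u a w v c (by simp; grind) a4 a5 B c4 c5
  · by_cases h : a = b
    · subst h; exact F4 u a v w (by grind) a4 b5 h2 h3
    · exact F5 u a w b v (by simp; grind) a4 a5 b4 b5 C
  · by_cases h : a = c
    · subst h; exact F4 u v a w (by grind) h1 c4 a5 h3
    by_cases h : b = c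
    · subst h; exact F4 w b u v (by grind) b4 c5 h1 h2
    by_cases h : a = b
    · subst h; exact F4 u a v w (by grind) a4 b5 h2 h3
    exact F6 u a w b v c (by simp; grind) a4 a5 b4 b5 c4 c5

theorem aux_bi {V : Type*} [Fintype V] (E : Set (V × V))
    (hconn : StronglyConnects E)
    (hcyc : ∀ c : List V, IsCycle E c → c.length ≤ 3)
    (hcard : 4 ≤ Fintype.card V)
    (hcut : ∀ w : V, ¬ IsCutVertex E w) (u v : V) (huv : u ≠ v)
    (h1 : (u, v) ∈ E) (h2 : (v, u) ∈ E)
    (r1 : Redundant E (u, v)) (r2 : Redundant E (v, u)) : False := by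
  obtain ⟨x, x1, x2, x3, x4⟩ := aux_two E hcyc u v huv h2 r1
  obtain ⟨y, y1, y2, y3, y4⟩ := aux_two E hcyc v u huv.symm h1 r2
  by_cases h : x = y
  · subst h
    exact aux_K3 E hconn hcyc hcard hcut u v x huv x2.symm x1.symm h1 h2 y3 x4 x3 y4
  · exact aux_four E hcyc u x v y (by grind) x3 x4 y3 y4

/-- Every directed cycle of `G` contains at most one redundant edge. -/
theorem cycle_at_most_one_redundant {V : Type*} [Fintype V] (E : Set (V × V))
    (hconn : StronglyConnects E)
    (hcyc : ∀ c : List V, IsCycle E c → c.length ≤ 3)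
    (hcard : 4 ≤ Fintype.card V)
    (hcut : ∀ w : V, ¬ IsCutVertex E w)
    (c : List V) (hc : IsCycle E c) :
    ∀ e₁ ∈ cycleEdges c, ∀ e₂ ∈ cycleEdges c,
      Redundant E e₁ → Redundant E e₂ → e₁ = e₂ := by
  have hlen := hcyc c hc
  have T := aux_tri E hconn hcyc hcard hcut
  have B := aux_bi E hconn hcyc hcard hcut
  obtain ⟨hne, hn, hE⟩ := hc
  match c, hne, hn, hE, hlen with
  | [], hne, _, _, _ => exact absurd rfl hne
  | [a], _, _, _, _ =>
    intro e₁ h₁ e₂ h₂ _ _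
    simp [cycleEdges] at h₁ h₂
    rw [h₁, h₂]
  | [a, b], _, hn, hE, _ =>
    intro e₁ h₁ e₂ h₂ r₁ r₂
    simp [cycleEdges] at h₁ h₂ hn hE
    rcases h₁ with rfl | rfl <;> rcases h₂ with rfl | rfl
    · rfl
    · exact (B a b hn hE.1 hE.2 r₁ r₂).elim
    · exact (B a b hn hE.1 hE.2 r₂ r₁).elim
    · rfl
  | [a, b, d], _, hn, hE, _ =>
    intro e₁ h₁ e₂ h₂ r₁ r₂
    simp [cycleEdges] at h₁ h₂ hn hE
    obtain ⟨⟨hab, had⟩, hbd⟩ := hn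
    obtain ⟨E1, E2, E3⟩ := hE
    have T1 := T a b d hab hbd had E1 E2 E3
    have T2 := T b d a hbd (Ne.symm had) (Ne.symm hab) E2 E3 E1
    have T3 := T d a b (Ne.symm had) hab (Ne.symm hbd) E3 E1 E2
    rcases h₁ with rfl | rfl | rfl <;> rcases h₂ with rfl | rfl | rfl
    · rfl
    · exact (T1 r₁ r₂).elim
    · exact (T3 r₂ r₁).elim
    · exact (T1 r₂ r₁).elim
    · rfl
    · exact (T2 r₁ r₂).elim
    · exact (T3 r₁ r₂).elim
    · exact (T2 r₂ r₁).elim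
    · rfl
  | _ :: _ :: _ :: _ :: _, _, _, _, hlen => simp only [List.length_cons] at hlen; omega
end

section
/- Every redundant edge of G provides a cycle for at most two unsatisfied edges of G. -/
theorem aux_zip {V : Type*} (E : Set (V × V)) (l : List V) : ∀ x y : V,
    List.IsChain (fun a b => (a, b) ∈ E) (x :: (l ++ [y])) →
    ∀ e ∈ (x :: l).zip (l ++ [y]), e ∈ E := by
  induction l with
  | nil => intro x y h e he; simp at h he; subst he; exact h
  | cons z l ih =>
    intro x y h e he
    simp only [List.cons_append, List.isChain_cons_cons] at h
    simp only [List.cons_append, List.zip_cons_cons, List.mem_cons] at he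
    rcases he with rfl | he
    · exact h.1
    · exact ih z y h.2 e (by simpa using he)

theorem aux_cycle_s3 {V : Type*} {E : Set (V × V)}
    (hcyc : ∀ c : List V, IsCycle E c → c.length ≤ 3) (x : V) (l : List V)
    (hn : (x :: l).Nodup)
    (hc : List.IsChain (fun a b => (a, b) ∈ E) (x :: (l ++ [x]))) : l.length ≤ 2 := by
  have := hcyc (x :: l) ⟨by simp, hn, by
    have := aux_zip E l x x hc
    simpa [cycleEdges] using this⟩
  simp only [List.length_cons] at this
  omega

/-- simple path extraction -/
theorem aux_simple {V : Type*} {R : V → V → Prop} {v u : V} (h : Relation.ReflTransGen R v u) :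
    v = u ∨ ∃ l : List V, (v :: (l ++ [u])).Nodup ∧ List.IsChain R (v :: (l ++ [u])) := by
  induction h using Relation.ReflTransGen.head_induction_on with
  | refl => left; rfl
  | @head a c hab _ ih =>
    by_cases hau : a = u
    · left; exact hau
    right
    rcases ih with rfl | ⟨l, hn, hc⟩
    · exact ⟨[], by simpa using hau, by simpa using hab⟩
    · by_cases hm : a ∈ c :: l
      · obtain ⟨s, t, hst⟩ := List.append_of_mem hm
        have e : c :: (l ++ [u]) = s ++ (a :: (t ++ [u])) := by
          rw [← List.cons_append, hst]; simp
        rw [e] at hn hc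
        exact ⟨t, (List.nodup_append.1 hn).2.1, (List.isChain_append.1 hc).2.1⟩
      · refine ⟨c :: l, ?_, ?_⟩
        · refine List.nodup_cons.2 ⟨?_, hn⟩
          simp only [List.mem_cons, List.cons_append, List.mem_append, List.not_mem_nil] at hm ⊢
          tauto
        · exact List.isChain_cons_cons.2 ⟨hab, hc⟩

theorem aux_classify {V : Type*} {E : Set (V × V)}
    (hcyc : ∀ c : List V, IsCycle E c → c.length ≤ 3) {a b : V} (hr : (a, b) ∈ E)
    {e : V × V} (hu : Unsatisfied E e) (hp : ProvidesCycle E (a, b) e) :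
    e = (b, a) ∨ ∃ u, u ≠ a ∧ u ≠ b ∧ (b, u) ∈ E ∧ (u, a) ∈ E ∧
      ((Necessary E (b, u) ∧ e = (u, a)) ∨ (Necessary E (u, a) ∧ e = (b, u))) := by
  obtain ⟨x, y⟩ := e
  obtain ⟨hE, hN⟩ := hu
  simp only [ProvidesCycle] at hp hN
  rcases aux_simple hp with rfl | ⟨l, hn, hc⟩
  · exact absurd .refl hN
  have hsub : ∀ p q, (Necessary E (p, q) ∨ (p, q) = (a, b)) → (p, q) ∈ E := by
    rintro p q (h | h)
    · exact h.1
    · rw [h]; exact hr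
  have hlen := aux_cycle_s3 hcyc y (l ++ [x]) hn (by
    have h1 := hc.imp hsub
    rw [← List.cons_append]
    rw [List.isChain_append]
    refine ⟨h1, by simp, ?_⟩
    intro p hp q hq
    rw [← List.cons_append] at hp
    rw [List.getLast?_concat] at hp
    simp at hp hq
    subst hp hq
    exact hE)
  match l, hlen with
  | [], _ =>
    simp at hc
    left
    rcases hc with h | ⟨rfl, rfl⟩
    · exact absurd (.single h) hN
    · rfl
  | [w], _ =>
    simp at hc hn
    right
    obtain ⟨h1, h2⟩ := hc
    rcases h1 with h1 | ⟨rfl, rfl⟩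
    · rcases h2 with h2 | ⟨rfl, rfl⟩
      · exact absurd (.tail (.single h1) h2) hN
      · exact ⟨y, by tauto, by tauto, hE, h1.1, .inr ⟨h1, rfl⟩⟩
    · rcases h2 with h2 | ⟨rfl, rfl⟩
      · exact ⟨x, by tauto, by tauto, h2.1, hE, .inl ⟨h2, rfl⟩⟩
      · tauto
  | _ :: _ :: _, h => simp at h

theorem aux_order {V : Type*} {E : Set (V × V)}
    (hcyc : ∀ c : List V, IsCycle E c → c.length ≤ 3) {a b u v : V} (hr : (a, b) ∈ E)
    (hbu : (b, u) ∈ E) (hva : (v, a) ∈ E) {s t : List V} (hus : u ∈ s)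
    (hn : (a :: (s ++ v :: t ++ [b])).Nodup)
    (hc : List.IsChain (fun a b => (a, b) ∈ E) (a :: (s ++ v :: t ++ [b]))) : False := by
  have e : a :: (s ++ v :: t ++ [b]) = (a :: (s ++ [v])) ++ (t ++ [b]) := by simp
  have hlen := aux_cycle_s3 hcyc a (s ++ [v]) (by
    rw [e] at hn; exact (List.nodup_append.1 hn).1) (by
    rw [e] at hc
    have h1 := (List.isChain_append.1 hc).1
    rw [← List.cons_append]
    rw [List.isChain_append]
    refine ⟨h1, by simp, ?_⟩
    intro p hp q hq
    rw [← List.cons_append] at hp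
    rw [List.getLast?_concat] at hp
    simp at hp hq
    subst hp hq
    exact hva)
  match s, hlen, hus with
  | [w], _, hus =>
    simp at hus
    subst hus
    have h2 : (u, v) ∈ E := by simp at hc; exact hc.2.1
    have := aux_cycle_s3 hcyc a [b, u, v] (by
      simp at hn ⊢
      grind) (by simp; tauto)
    simp at this
  | _ :: _ :: _, h, _ => simp at h

theorem aux_mem_s3 {V : Type*} {E : Set (V × V)}
    (hcyc : ∀ c : List V, IsCycle E c → c.length ≤ 3) {a b u : V}
    (hua : u ≠ a) (hub : u ≠ b) (hbu : (b, u) ∈ E) (hva : (u, a) ∈ E) {l : List V} (hl : l ≠ [])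
    (hn : (a :: (l ++ [b])).Nodup)
    (hc : List.IsChain (fun a b => (a, b) ∈ E) (a :: (l ++ [b]))) : u ∈ l := by
  by_contra hu
  have e : a :: (l ++ [b, u] ++ [a]) = (a :: (l ++ [b])) ++ [u, a] := by simp
  have := aux_cycle_s3 hcyc a (l ++ [b, u]) (by
      simp [List.nodup_append] at hn ⊢
      grind) (by
    rw [e, List.isChain_append]
    refine ⟨hc, by simpa using hva, ?_⟩
    intro p hp q hq
    rw [← List.cons_append] at hp
    rw [List.getLast?_concat] at hp
    simp at hp hq
    subst hp hq
    exact hbu)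
  cases l <;> simp at this hl

theorem aux_path_s3 {V : Type*} {E : Set (V × V)} {a b : V} (hab : a ≠ b)
    (hr : Redundant E (a, b)) : ∃ l : List V, l ≠ [] ∧ (a :: (l ++ [b])).Nodup ∧
      List.IsChain (fun a b => (a, b) ∈ E) (a :: (l ++ [b])) := by
  rcases aux_simple (hr.2 a b) with h | ⟨l, hn, hc⟩
  · exact absurd h hab
  · refine ⟨l, ?_, hn, hc.imp fun p q h => h.1⟩
    rintro rfl
    simp at hc

theorem aux_unique {V : Type*} {E : Set (V × V)}
    (hcyc : ∀ c : List V, IsCycle E c → c.length ≤ 3) {a b u v : V} (hab : a ≠ b)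
    (hr : Redundant E (a, b))
    (hua : u ≠ a) (hub : u ≠ b) (hbu : (b, u) ∈ E) (hau : (u, a) ∈ E)
    (hva : v ≠ a) (hvb : v ≠ b) (hbv : (b, v) ∈ E) (hav : (v, a) ∈ E) : u = v := by
  by_contra huv
  obtain ⟨l, hl, hn, hc⟩ := aux_path_s3 hab hr
  have h1 := aux_mem_s3 hcyc hua hub hbu hau hl hn hc
  have h2 := aux_mem_s3 hcyc hva hvb hbv hav hl hn hc
  obtain ⟨s, t, rfl⟩ := List.append_of_mem h2
  by_cases hs : u ∈ s
  · exact aux_order hcyc hr.1 hbu hav hs hn hc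
  · have ht : u ∈ t := by simp at h1; tauto
    obtain ⟨t1, t2, rfl⟩ := List.append_of_mem ht
    refine aux_order hcyc hr.1 hbv hau (s := s ++ v :: t1) (t := t2) (by simp) ?_ ?_
    · simpa using hn
    · simpa using hc

theorem aux_not_all {V : Type*} {E : Set (V × V)} (hconn : StronglyConnects E)
    (hcyc : ∀ c : List V, IsCycle E c → c.length ≤ 3) {a b u : V} (hab : a ≠ b)
    (hr : Redundant E (a, b)) (hba : (b, a) ∈ E)
    (hua : u ≠ a) (hub : u ≠ b) (hau : (u, a) ∈ E) (hN : Necessary E (b, u)) : False := by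
  obtain ⟨l, hl, hn, hc⟩ := aux_path_s3 hab hr
  have h1 := aux_mem_s3 hcyc hua hub hN.1 hau hl hn hc
  have hlen := aux_cycle_s3 hcyc a (l ++ [b]) hn (by
    rw [← List.cons_append]
    rw [List.isChain_append]
    refine ⟨hc, by simp, ?_⟩
    intro p hp q hq
    rw [← List.cons_append] at hp
    rw [List.getLast?_concat] at hp
    simp at hp hq
    subst hp hq
    exact hba)
  have h2 : (a, u) ∈ E := by
    match l, hlen, h1 with
    | [w], _, h1 =>
      simp at h1 hc
      subst h1
      exact hc.1
    | _ :: _ :: _, h, _ => simp at h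
  apply hN.2
  intro x y
  have := hconn x y
  induction this with
  | refl => exact .refl
  | @tail p q _ h ih =>
    by_cases hpq : (p, q) = (b, u)
    · obtain ⟨rfl, rfl⟩ := Prod.mk.inj hpq
      refine (ih.tail (c := a) ⟨hba, ?_⟩).tail ⟨h2, ?_⟩
      · simp; exact fun h => hua h.symm
      · simp; exact hab
    · exact ih.tail ⟨h, hpq⟩

theorem aux_pair {α : Type*} {S : Set α} {x y : α} (h : ∀ e ∈ S, e = x ∨ e = y) : S.ncard ≤ 2 :=
  (Set.ncard_le_ncard (t := {x, y}) (fun e he => by simpa using h e he)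
    (Set.toFinite _)).trans (by
      have := Set.ncard_insert_le x {y}
      simpa using this)

/-- Every redundant edge of `G` provides a cycle for at most two
unsatisfied edges of `G`. -/
theorem redundant_provides_at_most_two {V : Type*} [Fintype V] (E : Set (V × V))
    (hconn : StronglyConnects E)
    (hcyc : ∀ c : List V, IsCycle E c → c.length ≤ 3)
    (hcard : 4 ≤ Fintype.card V)
    (hcut : ∀ w : V, ¬ IsCutVertex E w)
    (r : V × V) (hr : Redundant E r) :
    {e : V × V | Unsatisfied E e ∧ ProvidesCycle E r e}.ncard ≤ 2 := by
  obtain ⟨a, b⟩ := r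
  have hcl : ∀ e ∈ {e : V × V | Unsatisfied E e ∧ ProvidesCycle E (a, b) e}, _ :=
    fun e he => aux_classify hcyc hr.1 he.1 he.2
  by_cases hab : a = b
  · subst hab
    have : {e : V × V | Unsatisfied E e ∧ ProvidesCycle E (a, a) e} = ∅ := by
      ext e
      simp only [Set.mem_setOf_eq, Set.mem_empty_iff_false, iff_false]
      rintro ⟨⟨_, h1⟩, h2⟩
      apply h1
      unfold ProvidesCycle at h2
      generalize e.2 = y at h2
      generalize e.1 = x at h2
      induction h2 with
      | refl => exact .refl
      | tail _ h ih =>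
        rcases h with h | h
        · exact ih.tail h
        · obtain ⟨rfl, rfl⟩ := Prod.mk.inj h
          exact ih
    rw [this]; simp
  by_cases ht : ∃ u, u ≠ a ∧ u ≠ b ∧ (b, u) ∈ E ∧ (u, a) ∈ E
  · obtain ⟨u, hua, hub, hbu, hau⟩ := ht
    have hcl' : ∀ e ∈ {e : V × V | Unsatisfied E e ∧ ProvidesCycle E (a, b) e},
        e = (b, a) ∨ (Necessary E (b, u) ∧ e = (u, a)) ∨ (Necessary E (u, a) ∧ e = (b, u)) := by
      intro e he
      rcases hcl e he with h | ⟨v, hva, hvb, hbv, hav, h⟩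
      · exact .inl h
      · rw [aux_unique hcyc hab hr hua hub hbu hau hva hvb hbv hav]
        exact .inr h
    by_cases hN : Necessary E (b, u)
    · by_cases hba : (b, a) ∈ E
      · exact (aux_not_all hconn hcyc hab hr hba hua hub hau hN).elim
      · apply aux_pair (x := (u, a)) (y := (b, u))
        intro e he
        have h1 := he.1.1
        rcases hcl' e he with rfl | h | h
        · exact absurd h1 hba
        · exact .inl h.2
        · exact .inr h.2
    · apply aux_pair (x := (b, a)) (y := (b, u))
      intro e he
      rcases hcl' e he with h | h | h
      · exact .inl h
      · exact absurd h.1 hN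
      · exact .inr h.2
  · apply aux_pair (x := (b, a)) (y := (b, a))
    intro e he
    rcases hcl e he with h | ⟨v, h1, h2, h3, h4, _⟩
    · exact .inl h
    · exact absurd ⟨v, h1, h2, h3, h4⟩ ht
end
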